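/- Let M be a Baire topological space and let B be a quasipoint of the lattice T(M) of open subsets of M. Then the set C(B) := {A ⊆ M : A is a Borel set and there exists U ∈ B with the symmetric difference A Δ U meagre in M} is a quasipoint of the lattice B(M) of Borel subsets of M, and C(B) contains no meagre set (C(B) ∩ I₁ = ∅, where I₁ is the collection of meagre Borel sets). -/

import Mathlib

/-- A filter base in an ordered set `L` with least element `⊥`:
a nonempty subset not containing `⊥` in which any two elements have a common lower bound. -/
def IsFilterBase {L : Type*} [PartialOrder L] [OrderBot L] (B : Set L) : Prop :=
  B.Nonempty ∧ ⊥ ∉ B ∧ ∀ a ∈ B, ∀ b ∈ B, ∃ c ∈ B, c ≤ a ∧ c ≤ b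

/-- A quasipoint is a maximal filter base. -/
def IsQuasipoint {L : Type*} [PartialOrder L] [OrderBot L] (B : Set L) : Prop :=
  IsFilterBase B ∧ ∀ C : Set L, IsFilterBase C → B ⊆ C → C = B

/-- The set of quasipoints of `L`. -/
def Quasipoint (L : Type*) [PartialOrder L] [OrderBot L] : Type _ :=
  {B : Set L // IsQuasipoint B}

/-- The basic (cl)open set of the Stone spectrum determined by `a : L`. -/
def Qset {L : Type*} [PartialOrder L] [OrderBot L] (a : L) : Set (Quasipoint L) :=
  {B | a ∈ B.1}

/-- The Stone topology on the set of quasipoints, generated by the sets `Qset a`. -/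
instance {L : Type*} [PartialOrder L] [OrderBot L] : TopologicalSpace (Quasipoint L) :=
  TopologicalSpace.generateFrom (Set.range (Qset : L → Set (Quasipoint L)))

open TopologicalSpace

/-- The lattice of Borel subsets of `M`, ordered by inclusion. -/
def BorelSet (M : Type*) [MeasurableSpace M] : Type _ :=
  {A : Set M // MeasurableSet A}

instance {M : Type*} [MeasurableSpace M] : PartialOrder (BorelSet M) :=
  inferInstanceAs (PartialOrder {A : Set M // MeasurableSet A})

instance {M : Type*} [MeasurableSpace M] : OrderBot (BorelSet M) where
  bot := ⟨∅, MeasurableSet.empty⟩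
  bot_le A := show (∅ : Set M) ⊆ A.1 from Set.empty_subset _

/-!
Every Borel set `A` agrees with some open set `U` up to a meagre set. If `U` misses a member `V` of
the quasipoint `B`, then `V \ A` agrees with `V` up to a meagre set, so it is a member of `C(B)` that
misses `A`. Hence if `A` meets every member of `C(B)`, then `U` meets every member of `B`; maximality
of `B` gives `U ∈ B`, so `A ∈ C(B)`, and this property makes the filter base `C(B)` maximal.
-/

open scoped Topology

theorem IsFilterBase.isQuasipoint {L : Type*} [PartialOrder L] [OrderBot L] {B : Set L}
    (hB : IsFilterBase B) (hmem : ∀ a, (∀ b ∈ B, ¬Disjoint a b) → a ∈ B) : IsQuasipoint B := by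
  refine ⟨hB, fun C ⟨_, hbot, hdir⟩ hBC ↦ Set.Subset.antisymm (fun a ha ↦ hmem a ?_) hBC⟩
  intro b hb hab
  obtain ⟨c, hc, hca, hcb⟩ := hdir a ha b (hBC hb)
  exact hbot (le_bot_iff.mp (hab hca hcb) ▸ hc)

theorem IsQuasipoint.mem_of_forall_not_disjoint {L : Type*} [SemilatticeInf L] [OrderBot L]
    {B : Set L} (hB : IsQuasipoint B) {a : L} (ha : ∀ b ∈ B, ¬Disjoint a b) : a ∈ B := by
  obtain ⟨⟨⟨b₀, hb₀⟩, _, hdir⟩, hmax⟩ := hB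
  let C : Set L := {c | ∃ b ∈ B, a ⊓ b ≤ c}
  have haC : a ∈ C := ⟨b₀, hb₀, inf_le_left⟩
  have hBC : B ⊆ C := fun b hb ↦ ⟨b, hb, inf_le_right⟩
  have hC : IsFilterBase C := by
    refine ⟨⟨a, haC⟩, fun ⟨b, hb, hab⟩ ↦ ha b hb (disjoint_iff_inf_le.mpr hab), ?_⟩
    rintro c ⟨b, hb, hbc⟩ c' ⟨b', hb', hbc'⟩
    obtain ⟨d, hd, hdb, hdb'⟩ := hdir b hb b' hb'
    exact ⟨a ⊓ d, ⟨d, hd, le_rfl⟩, (inf_le_inf_left a hdb).trans hbc,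
      (inf_le_inf_left a hdb').trans hbc'⟩
  exact hmax C hC hBC ▸ haC

section Meagre

variable {X : Type*} [TopologicalSpace X] {s t : Set X}

theorem isMeagre_symmDiff_iff_residualEq : IsMeagre (symmDiff s t) ↔ s =ᵇ t := by
  rw [Filter.eventuallyEq_set]
  refine Filter.eventually_congr (.of_forall fun x ↦ ?_)
  rw [Set.mem_symmDiff]
  tauto

theorem isMeagre_congr_of_residualEq (h : s =ᵇ t) : IsMeagre s ↔ IsMeagre t :=
  Filter.eventually_congr (h.mem_iff.mono fun _ hx ↦ not_congr hx)

theorem IsFilterBase.not_isMeagre_of_mem [BaireSpace X] {B : Set (Opens X)} (hB : IsFilterBase B)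
    {U : Opens X} (hU : U ∈ B) : ¬IsMeagre (U : Set X) :=
  not_isMeagre_of_isOpen U.isOpen <|
    U.ne_bot_iff_nonempty.mp fun hbot ↦ hB.2.1 (hbot ▸ hU)

end Meagre

section ResidualSaturation

variable {M : Type*} [TopologicalSpace M] [MeasurableSpace M] {B : Set (Opens M)}

/-- The family `C(B)` of measurable sets that agree with a member of `B` up to a meagre set. It is
defined for an arbitrary family `B` of open sets and relative to an arbitrary σ-algebra. -/
def residualSaturation (B : Set (Opens M)) : Set (BorelSet M) :=
  {A | ∃ U ∈ B, IsMeagre (symmDiff (A.1 : Set M) (U : Set M))}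

theorem mem_residualSaturation_iff {A : BorelSet M} :
    A ∈ residualSaturation B ↔ ∃ U ∈ B, A.1 =ᵇ (U : Set M) :=
  exists_congr fun _ ↦ and_congr_right' isMeagre_symmDiff_iff_residualEq

theorem not_isMeagre_of_mem_residualSaturation (hB : ∀ U ∈ B, ¬IsMeagre (U : Set M))
    {A : BorelSet M} (hA : A ∈ residualSaturation B) : ¬IsMeagre A.1 := by
  obtain ⟨U, hU, hAU⟩ := mem_residualSaturation_iff.mp hA
  exact (isMeagre_congr_of_residualEq hAU).not.mpr (hB U hU)

variable [OpensMeasurableSpace M]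

theorem IsFilterBase.residualSaturation (hB : IsFilterBase B)
    (hmeagre : ∀ U ∈ B, ¬IsMeagre (U : Set M)) : IsFilterBase (residualSaturation B) := by
  obtain ⟨⟨U₀, hU₀⟩, _, hdir⟩ := hB
  refine ⟨⟨⟨U₀, U₀.isOpen.measurableSet⟩, mem_residualSaturation_iff.mpr ⟨U₀, hU₀, .rfl⟩⟩,
    fun hbot ↦ not_isMeagre_of_mem_residualSaturation hmeagre hbot .empty, ?_⟩
  intro A hA A' hA'
  obtain ⟨U, hU, hAU⟩ := mem_residualSaturation_iff.mp hA
  obtain ⟨U', hU', hAU'⟩ := mem_residualSaturation_iff.mp hA'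
  obtain ⟨V, hV, hVU, hVU'⟩ := hdir U hU U' hU'
  have hinter : (A.1 ∩ A'.1 ∩ V : Set M) =ᵇ (V : Set M) := by
    have := (hAU.inter hAU').inter (.refl _ (V : Set M))
    rwa [Set.inter_eq_right.mpr (Set.subset_inter hVU hVU')] at this
  exact ⟨⟨A.1 ∩ A'.1 ∩ V, (A.2.inter A'.2).inter V.isOpen.measurableSet⟩,
    mem_residualSaturation_iff.mpr ⟨V, hV, hinter⟩, fun _ hx ↦ hx.1.1, fun _ hx ↦ hx.1.2⟩

theorem not_disjoint_of_forall_mem_residualSaturation {A : BorelSet M}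
    (hA : ∀ E ∈ residualSaturation B, ¬Disjoint A E) {U : Opens M} (hAU : A.1 =ᵇ (U : Set M))
    {V : Opens M} (hV : V ∈ B) : ¬Disjoint U V := by
  intro hUV
  let E : BorelSet M := ⟨V \ A.1, V.isOpen.measurableSet.diff A.2⟩
  have hEV : E.1 =ᵇ (V : Set M) := by
    have := (Filter.EventuallyEq.refl _ (V : Set M)).diff hAU
    rwa [(Opens.coe_disjoint.mpr hUV).sdiff_eq_right] at this
  have hAE : Disjoint A E := fun C hCA hCE ↦
    (disjoint_sdiff_self_right : Disjoint A.1 (V \ A.1)) (x := C.1) hCA hCE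
  exact hA E (mem_residualSaturation_iff.mpr ⟨V, hV, hEV⟩) hAE

theorem IsQuasipoint.mem_residualSaturation_of_forall_not_disjoint (hB : IsQuasipoint B)
    {A : BorelSet M} (hbaire : BaireMeasurableSet A.1)
    (hA : ∀ E ∈ residualSaturation B, ¬Disjoint A E) :
    A ∈ residualSaturation B := by
  obtain ⟨U, hU, hAU⟩ := hbaire.residualEq_isOpen
  have hUB : (⟨U, hU⟩ : Opens M) ∈ B := hB.mem_of_forall_not_disjoint fun _ hV ↦
    not_disjoint_of_forall_mem_residualSaturation hA hAU hV
  exact mem_residualSaturation_iff.mpr ⟨⟨U, hU⟩, hUB, hAU⟩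

end ResidualSaturation

theorem quasipoint_of_baire_quasipoint_general {M : Type*} [TopologicalSpace M]
    [MeasurableSpace M] [OpensMeasurableSpace M]
    (hbaire : ∀ A : Set M, MeasurableSet A → BaireMeasurableSet A)
    (B : Set (Opens M)) (hB : IsQuasipoint B) (hmeagre : ∀ U ∈ B, ¬IsMeagre (U : Set M)) :
    IsQuasipoint (residualSaturation B) ∧ ∀ A ∈ residualSaturation B, ¬IsMeagre A.1 :=
  ⟨(hB.1.residualSaturation hmeagre).isQuasipoint fun A hA ↦
      hB.mem_residualSaturation_of_forall_not_disjoint (hbaire A.1 A.2) hA,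
    fun _ hA ↦ not_isMeagre_of_mem_residualSaturation hmeagre hA⟩

/-- Let `M` be a Baire space and `B` a quasipoint of the lattice of open subsets of `M`. Then
`C(B) = {A Borel : A Δ U is meagre for some U ∈ B}` is a quasipoint of the lattice of Borel
subsets of `M` containing no meagre set. -/
theorem quasipoint_of_baire_quasipoint {M : Type*} [TopologicalSpace M] [BaireSpace M]
    [MeasurableSpace M] [BorelSpace M] (B : Set (Opens M)) (hB : IsQuasipoint B) :
    IsQuasipoint {A : BorelSet M | ∃ U ∈ B, IsMeagre (symmDiff (A.1 : Set M) (U : Set M))} ∧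
    ∀ A ∈ {A : BorelSet M | ∃ U ∈ B, IsMeagre (symmDiff (A.1 : Set M) (U : Set M))},
      ¬ IsMeagre (A.1 : Set M) :=
  quasipoint_of_baire_quasipoint_general (fun _ hA ↦ hA.baireMeasurableSet) B hB
    fun _ hU ↦ hB.1.not_isMeagre_of_mem hU
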